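/- Constant coefficients are best (corollary of the coefficient-shuffling theorem): Let (T, μ) be a probability space, let s > 0, let p ≥ 1 be a real number, and let k : T → ℝ be bounded and measurable. Let (σ_t)_{t ∈ [0,s]} be a family of measurable measure-preserving maps σ_t : T → T with σ₀ = id, such that for each τ ∈ T the map t ↦ k(σ_t(τ)) is continuous on [0,s]. Suppose j : T × [0,s] → ℝ is measurable, and for each τ ∈ T the function j(τ,·) is twice continuously differentiable with j(τ,0) = 0, ∂_t j(τ,0) = 1, ∂_t² j(τ,t) = k(σ_t(τ))·j(τ,t) for all t ∈ [0,s], and j(τ,t) > 0 for all t ∈ (0,s]. Then ∫_T j(τ,s)^p dμ(τ) ≤ ∫_T sn(−k(τ), s)^p dμ(τ). -/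

import Mathlib

open MeasureTheory

/-- The function `sn(k, t)`: the standard Jacobi solution of `j'' = -k·j`,
truncated at its first positive zero. -/
noncomputable def sn (k t : ℝ) : ℝ :=
  if 0 < k then
    if t ≤ Real.pi / Real.sqrt k then Real.sin (Real.sqrt k * t) / Real.sqrt k else 0
  else if k = 0 then t
  else Real.sinh (Real.sqrt (-k) * t) / Real.sqrt (-k)

open Set

/-- `u` solves the Jacobi equation `u'' = κ·u` on `[0, s]` with `u 0 = 0`, `u' 0 = 1`;
the derivative `u'` is carried as the function `du`. -/
structure IsJacobiSolution (κ : ℝ → ℝ) (s : ℝ) (u du : ℝ → ℝ) : Prop where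
  zero : u 0 = 0
  deriv_zero : du 0 = 1
  hasDerivAt : ∀ t ∈ Icc 0 s, HasDerivAt u (du t) t
  hasDerivAt_deriv : ∀ t ∈ Icc 0 s, HasDerivAt du (κ t * u t) t

namespace IsJacobiSolution

variable {κ ν u du v dv : ℝ → ℝ} {r s y : ℝ}

theorem mono (h : IsJacobiSolution κ s u du) (hrs : r ≤ s) : IsJacobiSolution κ r u du :=
  ⟨h.zero, h.deriv_zero, fun t ht => h.hasDerivAt t ⟨ht.1, ht.2.trans hrs⟩,
    fun t ht => h.hasDerivAt_deriv t ⟨ht.1, ht.2.trans hrs⟩⟩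

theorem continuousOn (h : IsJacobiSolution κ s u du) : ContinuousOn u (Icc 0 s) :=
  fun t ht => (h.hasDerivAt t ht).continuousAt.continuousWithinAt

/-- A solution exists for every bounded continuous coefficient: in polar coordinates
`u = ρ sin θ`, `u' = ρ cos θ` the equation for `θ` has a bounded Lipschitz right-hand side. -/
theorem exists_of_continuous (hκ : Continuous κ) {M : ℝ} (hM : ∀ t, |κ t| ≤ M) (hs : 0 ≤ s) :
    ∃ u du, IsJacobiSolution κ s u du := by
  have hM0 : 0 ≤ M := (abs_nonneg _).trans (hM 0)
  let f : ℝ → ℝ → ℝ := fun t θ => Real.cos θ ^ 2 - κ t * Real.sin θ ^ 2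
  have hfd : ∀ t θ, HasDerivAt (f t) (-(1 + κ t) * (2 * Real.sin θ * Real.cos θ)) θ := by
    intro t θ
    have h1 := ((Real.hasDerivAt_cos θ).pow 2).sub
      (((Real.hasDerivAt_sin θ).pow 2).const_mul (κ t))
    refine h1.congr_deriv ?_
    simp only [Nat.cast_ofNat]
    ring
  have hPL : IsPicardLindelof f (tmin := -1) (tmax := s + 1) ⟨0, by constructor <;> linarith⟩ 0
      (NNReal.mk ((1 + M) * (s + 1)) (by positivity)) 0 (NNReal.mk (1 + M) (by positivity))
      (NNReal.mk (1 + M) (by positivity)) := by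
    refine ⟨fun t _ => ?_, fun x _ => ?_, fun t _ x _ => ?_, ?_⟩
    · refine LipschitzWith.lipschitzOnWith ?_
      refine lipschitzWith_of_nnnorm_deriv_le (fun θ => (hfd t θ).differentiableAt) fun θ => ?_
      rw [(hfd t θ).deriv, ← NNReal.coe_le_coe, coe_nnnorm, Real.norm_eq_abs, abs_mul]
      have h1 : |-(1 + κ t)| ≤ 1 + M := by
        have := abs_le.1 (hM t)
        rw [abs_le]; constructor <;> linarith
      have h2 : |2 * Real.sin θ * Real.cos θ| ≤ 1 := by
        rw [← Real.sin_two_mul]; exact Real.abs_sin_le_one _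
      calc _ ≤ (1 + M) * 1 := by gcongr
        _ = _ := mul_one _
    · exact (continuous_const.sub (hκ.mul continuous_const)).continuousOn
    · have h1 := abs_le.1 (hM t)
      have h2 := Real.sin_sq_add_cos_sq x
      change |Real.cos x ^ 2 - κ t * Real.sin x ^ 2| ≤ 1 + M
      rw [abs_le]
      constructor <;> nlinarith [sq_nonneg (Real.sin x), sq_nonneg (Real.cos x)]
    · simp only [NNReal.coe_mk, sub_zero, NNReal.coe_zero, zero_sub, neg_neg]
      have : max (s + 1) 1 = s + 1 := max_eq_left (by linarith)
      simp [this]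
  obtain ⟨θ, hθ0, hθ⟩ := hPL.exists_eq_forall_mem_Icc_hasDerivWithinAt₀
  have hθd : ∀ t ∈ Ioo (-1) (s + 1), HasDerivAt θ (f t (θ t)) t := fun t ht =>
    (hθ t (Ioo_subset_Icc_self ht)).hasDerivAt (Icc_mem_nhds ht.1 ht.2)
  let q : ℝ → ℝ := fun t => (1 + κ t) * (Real.sin (θ t) * Real.cos (θ t))
  have hq : ContinuousOn q (Ioo (-1) (s + 1)) := by
    have : ContinuousOn θ (Ioo (-1) (s + 1)) := fun t ht =>
      (hθd t ht).continuousAt.continuousWithinAt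
    exact (continuous_const.add hκ).continuousOn.mul
      ((Real.continuous_sin.comp_continuousOn this).mul
        (Real.continuous_cos.comp_continuousOn this))
  have hsub : Icc 0 s ⊆ Ioo (-1) (s + 1) := fun t ht =>
    ⟨by linarith [ht.1], by linarith [ht.2]⟩
  let Q : ℝ → ℝ := fun t => Real.exp (∫ x in (0 : ℝ)..t, q x)
  have hQ : ∀ t ∈ Icc 0 s, HasDerivAt Q (Q t * q t) t := by
    intro t ht
    refine HasDerivAt.exp (intervalIntegral.integral_hasDerivAt_right ?_ ?_ ?_)
    · refine (hq.mono ?_).intervalIntegrable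
      rw [uIcc_of_le ht.1]
      exact (Icc_subset_Icc le_rfl ht.2).trans hsub
    · exact hq.stronglyMeasurableAtFilter isOpen_Ioo _ (hsub ht)
    · exact hq.continuousAt (isOpen_Ioo.mem_nhds (hsub ht))
  refine ⟨fun t => Q t * Real.sin (θ t), fun t => Q t * Real.cos (θ t), ?_, ?_, ?_, ?_⟩
  · simp [hθ0]
  · simp [hθ0, Q]
  · intro t ht
    refine ((hQ t ht).mul (hθd t (hsub ht)).sin).congr_deriv ?_
    simp only [f, q]
    linear_combination (Q t * Real.cos (θ t)) * Real.sin_sq_add_cos_sq (θ t)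
  · intro t ht
    refine ((hQ t ht).mul (hθd t (hsub ht)).cos).congr_deriv ?_
    simp only [f, q]
    linear_combination (κ t * Q t * Real.sin (θ t)) * Real.sin_sq_add_cos_sq (θ t)

/-- Wronskian identity between a solution and a solution with reversed time. -/
theorem eq_add_integral (hu : IsJacobiSolution κ s u du) (hv : IsJacobiSolution ν s v dv)
    (hκ : Continuous κ) (hν : Continuous ν) (hr : r ∈ Icc 0 s) :
    u s = du (s - r) * v r + u (s - r) * dv r +
      ∫ t in (s - r)..s, (κ t - ν (s - t)) * (u t * v (s - t)) := by
  have hsub : uIcc (s - r) s ⊆ Icc 0 s := by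
    rw [uIcc_of_le (by linarith [hr.1])]
    exact Icc_subset_Icc (by linarith [hr.2]) le_rfl
  have hmaps : MapsTo (fun t => s - t) (Icc 0 s) (Icc 0 s) := fun t ht =>
    ⟨by linarith [ht.2], by linarith [ht.1]⟩
  have key := intervalIntegral.integral_eq_sub_of_hasDerivAt
    (f := fun t => du t * v (s - t) + u t * dv (s - t))
    (f' := fun t => (κ t - ν (s - t)) * (u t * v (s - t))) (a := s - r) (b := s) ?_ ?_
  · simp only [sub_self, sub_sub_cancel, hv.zero, hv.deriv_zero] at key
    linarith
  · intro t ht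
    have ht := hsub ht
    have h1 := HasDerivAt.comp_const_sub s t (hv.hasDerivAt _ (hmaps ht))
    have h2 := HasDerivAt.comp_const_sub s t (hv.hasDerivAt_deriv _ (hmaps ht))
    refine (((hu.hasDerivAt_deriv t ht).mul h1).add ((hu.hasDerivAt t ht).mul h2)).congr_deriv ?_
    ring
  · refine (ContinuousOn.mono ?_ hsub).intervalIntegrable
    exact (hκ.sub (hν.comp (continuous_const.sub continuous_id))).continuousOn.mul
      (hu.continuousOn.mul (hv.continuousOn.comp (by fun_prop) hmaps))

/-- Sturm comparison with a nonnegative solution of a constant-coefficient equation. -/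
theorem le_of_le_const (hu : IsJacobiSolution κ s u du)
    (hv : IsJacobiSolution (fun _ => y) s v dv) (hκ : Continuous κ)
    (hle : ∀ t ∈ Icc 0 s, κ t ≤ y) (hu0 : ∀ t ∈ Icc 0 s, 0 ≤ u t)
    (hv0 : ∀ t ∈ Icc 0 s, 0 ≤ v t) (hr : r ∈ Icc 0 s) : u r ≤ v r := by
  have h := (hu.mono hr.2).eq_add_integral (hv.mono hr.2) hκ continuous_const
    (right_mem_Icc.2 hr.1)
  simp only [sub_self, hu.zero, hu.deriv_zero, one_mul, zero_mul, add_zero] at h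
  have h2 : ∫ t in (0 : ℝ)..r, (κ t - y) * (u t * v (r - t)) ≤ 0 := by
    rw [← neg_nonneg, ← intervalIntegral.integral_neg]
    refine intervalIntegral.integral_nonneg hr.1 fun t ht => neg_nonneg.2 ?_
    refine mul_nonpos_of_nonpos_of_nonneg
      (sub_nonpos.2 (hle t ⟨ht.1, ht.2.trans hr.2⟩)) (mul_nonneg (hu0 t ⟨ht.1, ht.2.trans hr.2⟩)
        (hv0 _ ⟨by linarith [ht.2], by linarith [ht.1, hr.2]⟩))
  linarith

/-- A solution is either positive on `(0, s]` or has a first zero there, which it reaches with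
nonpositive slope. -/
theorem pos_or_exists_first_zero (hu : IsJacobiSolution κ s u du) (hs : 0 < s) :
    (∀ t ∈ Ioc 0 s, 0 < u t) ∨
      ∃ z ∈ Ioc 0 s, u z = 0 ∧ du z ≤ 0 ∧ ∀ t ∈ Icc 0 z, 0 ≤ u t := by
  by_cases h : ∀ t ∈ Ioc 0 s, 0 < u t
  · exact Or.inl h
  right
  push Not at h
  obtain ⟨a, ha, hua⟩ := h
  have hd := hu.hasDerivAt 0 (left_mem_Icc.2 hs.le)
  rw [hu.deriv_zero] at hd
  have hev : ∀ᶠ t in nhdsWithin 0 (Ioi 0), 0 < u t := by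
    have h1 := hd.tendsto_slope.mono_left
      (nhdsWithin_mono (0 : ℝ) (fun t (ht : 0 < t) => ht.ne'))
    filter_upwards [h1.eventually (lt_mem_nhds one_pos), self_mem_nhdsWithin] with t ht ht0
    rw [slope_def_field, hu.zero, sub_zero, sub_zero] at ht
    exact (div_pos_iff_of_pos_right ht0).1 ht
  obtain ⟨e, he, hue⟩ := (mem_nhdsGT_iff_exists_Ioo_subset).1 hev
  have he : 0 < e := he
  let Z := Icc (e / 2) s ∩ u ⁻¹' Iic 0
  have hsub : Icc (e / 2) s ⊆ Icc 0 s := Icc_subset_Icc (by linarith) le_rfl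
  have hZc : IsCompact Z := isCompact_Icc.of_isClosed_subset
    ((hu.continuousOn.mono hsub).preimage_isClosed_of_isClosed isClosed_Icc isClosed_Iic)
    inter_subset_left
  have haZ : a ∈ Z := by
    refine ⟨⟨?_, ha.2⟩, hua⟩
    by_contra hlt
    have : 0 < u a := hue ⟨ha.1, by linarith⟩
    linarith
  obtain ⟨z, hzZ, hzmin⟩ := hZc.exists_isLeast ⟨a, haZ⟩
  have hz0 : 0 < z := by linarith [hzZ.1.1]
  have hpos : ∀ t ∈ Ioo 0 z, 0 < u t := by
    intro t ht
    by_contra hneg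
    push Not at hneg
    rcases lt_or_ge t (e / 2) with h1 | h1
    · have : 0 < u t := hue ⟨ht.1, by linarith⟩
      linarith
    · have := hzmin (show t ∈ Z from ⟨⟨h1, ht.2.le.trans hzZ.1.2⟩, hneg⟩)
      linarith [ht.2]
  have hzI : z ∈ Icc 0 s := hsub hzZ.1
  have hevz : ∀ᶠ t in nhdsWithin z (Iio z), t ∈ Ioo 0 z := Ioo_mem_nhdsLT hz0
  have huz : u z = 0 := by
    refine le_antisymm hzZ.2 ?_
    refine ge_of_tendsto ((hu.hasDerivAt z hzI).continuousAt.tendsto.mono_left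
      (nhdsWithin_le_nhds (s := Iio z))) ?_
    filter_upwards [hevz] with t ht using (hpos t ht).le
  refine ⟨z, ⟨hz0, hzZ.1.2⟩, huz, ?_, fun t ht => ?_⟩
  · refine le_of_tendsto ((hu.hasDerivAt z hzI).tendsto_slope.mono_left
      (nhdsWithin_mono z (show Iio z ⊆ {z}ᶜ from fun t (ht : t < z) => ht.ne))) ?_
    filter_upwards [hevz] with t ht
    rw [slope_def_field, huz, sub_zero]
    exact div_nonpos_of_nonneg_of_nonpos (hpos t ht).le (by linarith [ht.2])
  · rcases ht.1.eq_or_lt with h1 | h1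
    · rw [← h1, hu.zero]
    · rcases ht.2.eq_or_lt with h2 | h2
      · rw [h2, huz]
      · exact (hpos t ⟨h1, h2⟩).le

end IsJacobiSolution

/-- The solution of `j'' = y·j`, `j 0 = 0`, `j' 0 = 1`, without truncation. -/
noncomputable def constSol (y t : ℝ) : ℝ :=
  if y < 0 then Real.sin (√(-y) * t) / √(-y)
  else if y = 0 then t
  else Real.sinh (√y * t) / √y

namespace constSol

variable {s t y z : ℝ}

theorem exists_isJacobiSolution (y s : ℝ) :
    ∃ d, IsJacobiSolution (fun _ => y) s (constSol y) d := by
  rcases lt_trichotomy y 0 with h | h | h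
  · have hq : √(-y) ≠ 0 := (Real.sqrt_pos.2 (neg_pos.2 h)).ne'
    have hsq : √(-y) * √(-y) = -y := Real.mul_self_sqrt (neg_pos.2 h).le
    have he : constSol y = fun t => Real.sin (√(-y) * t) / √(-y) := by
      ext t; simp [constSol, h]
    refine ⟨fun t => Real.cos (√(-y) * t), by simp [he], by simp, fun t _ => ?_, fun t _ => ?_⟩
    · rw [he]
      refine ((((hasDerivAt_id t).const_mul √(-y)).sin).div_const _).congr_deriv ?_
      simp only [id]
      field_simp
    · refine (((hasDerivAt_id t).const_mul √(-y)).cos).congr_deriv ?_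
      simp only [id, he]
      field_simp
      linear_combination (-Real.sin (√(-y) * t)) * hsq
  · have he : constSol y = fun t => t := by
      ext t; simp [constSol, h]
    refine ⟨fun _ => 1, by simp [he], rfl, fun t _ => ?_, fun t _ => ?_⟩
    · rw [he]; exact hasDerivAt_id t
    · rw [h, zero_mul]; exact hasDerivAt_const t 1
  · have hq : √y ≠ 0 := (Real.sqrt_pos.2 h).ne'
    have hsq : √y * √y = y := Real.mul_self_sqrt h.le
    have he : constSol y = fun t => Real.sinh (√y * t) / √y := by
      ext t; simp [constSol, h.le, h.ne']
    refine ⟨fun t => Real.cosh (√y * t), by simp [he], by simp, fun t _ => ?_, fun t _ => ?_⟩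
    · rw [he]
      refine ((((hasDerivAt_id t).const_mul √y).sinh).div_const _).congr_deriv ?_
      simp only [id]
      field_simp
    · refine (((hasDerivAt_id t).const_mul √y).cosh).congr_deriv ?_
      simp only [id, he]
      field_simp
      linear_combination (Real.sinh (√y * t)) * hsq

@[fun_prop]
theorem continuous (y : ℝ) : Continuous (constSol y) := by
  unfold constSol
  split_ifs <;> fun_prop

theorem nonneg (hs : 0 < s) (hy : -(Real.pi / s) ^ 2 ≤ y) (ht : t ∈ Icc 0 s) :
    0 ≤ constSol y t := by
  unfold constSol
  split_ifs with h1 h2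
  · refine div_nonneg (Real.sin_nonneg_of_nonneg_of_le_pi
      (mul_nonneg (Real.sqrt_nonneg _) ht.1) ?_) (Real.sqrt_nonneg _)
    have h : √(-y) ≤ Real.pi / s := by
      rw [Real.sqrt_le_left (by positivity)]; linarith
    calc √(-y) * t ≤ Real.pi / s * s := by
          have := ht.1; have := ht.2
          gcongr
      _ = Real.pi := by field_simp
  · exact ht.1
  · exact div_nonneg (Real.sinh_nonneg_iff.2 (mul_nonneg (Real.sqrt_nonneg _) ht.1))
      (Real.sqrt_nonneg _)

theorem eq_zero_of_critical (hs : 0 < s) : constSol (-(Real.pi / s) ^ 2) s = 0 := by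
  have h : -(Real.pi / s) ^ 2 < 0 := by have := Real.pi_pos; rw [neg_lt_zero]; positivity
  have h2 : √((Real.pi / s) ^ 2) = Real.pi / s := Real.sqrt_sq (by positivity)
  rw [constSol, if_pos h, neg_neg, h2, div_mul_cancel₀ _ hs.ne', Real.sin_pi, zero_div]

theorem sn_neg_eq (hs : 0 < s) (y : ℝ) :
    sn (-y) s = constSol (max y (-(Real.pi / s) ^ 2)) s := by
  have hneg : -(Real.pi / s) ^ 2 < 0 := by have := Real.pi_pos; rw [neg_lt_zero]; positivity
  by_cases hy : y < 0
  · have hy' : 0 < -y := neg_pos.2 hy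
    have hq : 0 < √(-y) := Real.sqrt_pos.2 hy'
    rw [sn, if_pos hy']
    rcases lt_or_ge y (-(Real.pi / s) ^ 2) with h | h
    · rw [max_eq_right h.le, eq_zero_of_critical hs, if_neg]
      rw [le_div_iff₀ hq, mul_comm, ← le_div_iff₀ hs,
        Real.sqrt_le_left (div_nonneg Real.pi_pos.le hs.le)]
      linarith
    · rw [max_eq_left h, constSol, if_pos hy, if_pos]
      rw [le_div_iff₀ hq, mul_comm, ← le_div_iff₀ hs,
        Real.sqrt_le_left (div_nonneg Real.pi_pos.le hs.le)]
      linarith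
  · rw [max_eq_left (by linarith), sn, constSol, if_neg (by linarith), if_neg hy]
    simp

theorem mono (hs : 0 < s) (hy : -(Real.pi / s) ^ 2 ≤ y) (hyz : y ≤ z) (ht : t ∈ Icc 0 s) :
    constSol y t ≤ constSol z t := by
  obtain ⟨_, h1⟩ := exists_isJacobiSolution y s
  obtain ⟨_, h2⟩ := exists_isJacobiSolution z s
  exact h1.le_of_le_const h2 continuous_const (fun _ _ => hyz) (fun _ => nonneg hs hy)
    (fun _ => nonneg hs (hy.trans hyz)) ht

theorem sub_eq_integral (hs : 0 ≤ s) (y z : ℝ) : constSol z s - constSol y s =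
    (z - y) * ∫ t in (0 : ℝ)..s, constSol z t * constSol y (s - t) := by
  obtain ⟨_, h1⟩ := exists_isJacobiSolution y s
  obtain ⟨_, h2⟩ := exists_isJacobiSolution z s
  have h := h2.eq_add_integral h1 continuous_const continuous_const (right_mem_Icc.2 hs)
  simp only [sub_self, h2.zero, h2.deriv_zero, one_mul, zero_mul, add_zero] at h
  rw [← intervalIntegral.integral_const_mul]
  linarith

end constSol

theorem Real.rpow_add_mul_sub_le_rpow {p a b : ℝ} (hp : 1 ≤ p) (ha : 0 ≤ a) (hb : 0 ≤ b) :
    a ^ p + p * a ^ (p - 1) * (b - a) ≤ b ^ p := by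
  rcases ha.eq_or_lt with rfl | ha
  · rw [Real.zero_rpow (by linarith)]
    rcases hp.eq_or_lt with rfl | hp
    · simp
    · rw [Real.zero_rpow (by linarith)]
      simpa using Real.rpow_nonneg hb p
  · have h := one_add_mul_self_le_rpow_one_add (s := b / a - 1)
      (by linarith [div_nonneg hb ha.le]) hp
    rw [add_sub_cancel, Real.div_rpow hb ha.le, le_div_iff₀ (by positivity)] at h
    refine le_of_eq_of_le ?_ h
    rw [Real.rpow_sub_one ha.ne']
    field_simp

/-- The sensitivity of `constSol y s ^ p` to a change of the coefficient at time `t`. -/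
noncomputable def sensitivity (s p y t : ℝ) : ℝ :=
  p * constSol y s ^ (p - 1) * (constSol y t * constSol y (s - t))

namespace sensitivity

variable {s t y z p : ℝ}

@[fun_prop]
theorem continuous (s p y : ℝ) : Continuous (sensitivity s p y) := by
  unfold sensitivity
  fun_prop

theorem sub_left (s p y t : ℝ) : sensitivity s p y (s - t) = sensitivity s p y t := by
  simp only [sensitivity, sub_sub_cancel, mul_comm (constSol y t)]

theorem nonneg (hs : 0 < s) (hp : 1 ≤ p) (hy : -(Real.pi / s) ^ 2 ≤ y) (ht : t ∈ Icc 0 s) :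
    0 ≤ sensitivity s p y t :=
  mul_nonneg (mul_nonneg (by linarith)
      (Real.rpow_nonneg (constSol.nonneg hs hy (right_mem_Icc.2 hs.le)) _))
    (mul_nonneg (constSol.nonneg hs hy ht)
      (constSol.nonneg hs hy ⟨by linarith [ht.2], by linarith [ht.1]⟩))

theorem mono (hs : 0 < s) (hp : 1 ≤ p) (hy : -(Real.pi / s) ^ 2 ≤ y) (hyz : y ≤ z)
    (ht : t ∈ Icc 0 s) : sensitivity s p y t ≤ sensitivity s p z t := by
  have ht' : s - t ∈ Icc 0 s := ⟨by linarith [ht.2], by linarith [ht.1]⟩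
  have hs' : s ∈ Icc 0 s := right_mem_Icc.2 hs.le
  have h1 := constSol.nonneg hs hy ht
  have h2 := constSol.nonneg hs hy ht'
  have h3 := constSol.nonneg hs hy hs'
  have h4 := constSol.mono hs hy hyz ht
  have h5 := constSol.mono hs hy hyz ht'
  have h6 := constSol.mono hs hy hyz hs'
  have h7 : constSol y s ^ (p - 1) ≤ constSol z s ^ (p - 1) :=
    Real.rpow_le_rpow h3 h6 (by linarith)
  have h8 : 0 ≤ constSol z s ^ (p - 1) := Real.rpow_nonneg (h3.trans h6) _
  unfold sensitivity
  have := h1.trans h4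
  have : 0 ≤ p := by linarith
  gcongr

theorem integral_mono (hs : 0 < s) (hp : 1 ≤ p) (hy : -(Real.pi / s) ^ 2 ≤ y) (hyz : y ≤ z) :
    ∫ t in (0 : ℝ)..s, sensitivity s p y t ≤ ∫ t in (0 : ℝ)..s, sensitivity s p z t :=
  intervalIntegral.integral_mono_on hs.le ((continuous s p y).intervalIntegrable _ _)
    ((continuous s p z).intervalIntegrable _ _) fun _ ht => mono hs hp hy hyz ht

theorem mul_integral_le (hs : 0 < s) (hp : 1 ≤ p) (hy : -(Real.pi / s) ^ 2 ≤ y) (hyz : y ≤ z) :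
    (z - y) * ∫ t in (0 : ℝ)..s, sensitivity s p y t ≤ constSol z s ^ p - constSol y s ^ p := by
  have hs' : s ∈ Icc 0 s := right_mem_Icc.2 hs.le
  have h1 := constSol.nonneg hs hy hs'
  have h2 := Real.rpow_add_mul_sub_le_rpow hp h1 (h1.trans (constSol.mono hs hy hyz hs'))
  have h3 : (z - y) * ∫ t in (0 : ℝ)..s, constSol y t * constSol y (s - t) ≤
      constSol z s - constSol y s := by
    rw [constSol.sub_eq_integral hs.le]
    refine mul_le_mul_of_nonneg_left ?_ (sub_nonneg.2 hyz)
    refine intervalIntegral.integral_mono_on hs.le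
      (Continuous.intervalIntegrable (by fun_prop) _ _)
      (Continuous.intervalIntegrable (by fun_prop) _ _) fun t ht => ?_
    exact mul_le_mul_of_nonneg_right (constSol.mono hs hy hyz ht)
      (constSol.nonneg hs hy ⟨by linarith [ht.2], by linarith [ht.1]⟩)
  simp only [sensitivity, intervalIntegral.integral_const_mul]
  have h4 : 0 ≤ p * constSol y s ^ (p - 1) := mul_nonneg (by linarith) (Real.rpow_nonneg h1 _)
  nlinarith [mul_le_mul_of_nonneg_left h3 h4]

end sensitivity

namespace IsJacobiSolution

variable {κ κ₀ κ₁ u du v dv : ℝ → ℝ} {s p y z : ℝ}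

theorem nonneg_of_pos (hu : IsJacobiSolution κ s u du) (hpos : ∀ t ∈ Ioc 0 s, 0 < u t) :
    ∀ t ∈ Icc 0 s, 0 ≤ u t := by
  intro t ht
  rcases ht.1.eq_or_lt with h | h
  · rw [← h, hu.zero]
  · exact (hpos t ⟨h, ht.2⟩).le

theorem le_add_integral_constSol (hs : 0 < s) (hy : -(Real.pi / s) ^ 2 ≤ y)
    (hκ₁ : Continuous κ₁) (hκ₀ : Continuous κ₀) (h01 : ∀ t, κ₀ t ≤ κ₁ t) (h1y : ∀ t, κ₁ t ≤ y)
    (hu : IsJacobiSolution κ₁ s u du) (hu0 : ∀ t ∈ Icc 0 s, 0 ≤ u t)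
    (hv : IsJacobiSolution (fun t => κ₀ (s - t)) s v dv) (hz : z ∈ Icc 0 s)
    (hv0 : ∀ t ∈ Icc 0 z, 0 ≤ v t) :
    u s ≤ du (s - z) * v z + u (s - z) * dv z +
      ∫ t in (0 : ℝ)..s, (κ₁ t - κ₀ t) * (constSol y t * constSol y (s - t)) := by
  have hκ₀' : Continuous fun t => κ₀ (s - t) := by fun_prop
  obtain ⟨_, hc⟩ := constSol.exists_isJacobiSolution y s
  rw [hu.eq_add_integral hv hκ₁ hκ₀' hz]
  gcongr
  simp only [sub_sub_cancel]
  have hsz : 0 ≤ s - z := sub_nonneg.2 hz.2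
  have hC : Continuous fun t => (κ₁ t - κ₀ t) * (constSol y t * constSol y (s - t)) := by
    fun_prop
  have hmem : ∀ t ∈ Icc (s - z) s, t ∈ Icc 0 s := fun t ht => ⟨hsz.trans ht.1, ht.2⟩
  have hmem' : ∀ t ∈ Icc (s - z) s, s - t ∈ Icc 0 z := fun t ht =>
    ⟨by linarith [ht.2], by linarith [ht.1]⟩
  refine le_trans (b := ∫ t in (s - z)..s, (κ₁ t - κ₀ t) * (constSol y t * constSol y (s - t)))
    (intervalIntegral.integral_mono_on (by linarith [hz.1]) ?_ (hC.intervalIntegrable _ _) ?_) ?_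
  · refine ContinuousOn.intervalIntegrable ?_
    rw [uIcc_of_le (by linarith [hz.1])]
    exact (hκ₁.sub hκ₀).continuousOn.mul ((hu.continuousOn.mono hmem).mul
      ((hv.mono hz.2).continuousOn.comp (by fun_prop) hmem'))
  · intro t ht
    refine mul_le_mul_of_nonneg_left ?_ (sub_nonneg.2 (h01 t))
    refine mul_le_mul ?_ ?_ (hv0 _ (hmem' t ht)) (constSol.nonneg hs hy (hmem t ht))
    · exact hu.le_of_le_const hc hκ₁ (fun t _ => h1y t) hu0 (fun _ => constSol.nonneg hs hy)
        (hmem t ht)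
    · exact (hv.mono hz.2).le_of_le_const (hc.mono hz.2) hκ₀'
        (fun t _ => (h01 _).trans (h1y _)) hv0
        (fun t ht => constSol.nonneg hs hy ⟨ht.1, ht.2.trans hz.2⟩) (hmem' t ht)
  · refine intervalIntegral.integral_mono_interval hsz (by linarith [hz.1]) le_rfl ?_
      (hC.intervalIntegrable _ _)
    filter_upwards [ae_restrict_mem measurableSet_Ioc] with t ht
    exact mul_nonneg (sub_nonneg.2 (h01 t)) (mul_nonneg (constSol.nonneg hs hy ⟨ht.1.le, ht.2⟩)
      (constSol.nonneg hs hy ⟨by linarith [ht.2], by linarith [ht.1]⟩))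

/-- Raising the coefficient through the levels `Y 0 ≤ Y 1 ≤ ⋯ ≤ Y n`, the growth of `u s ^ p` is
bounded by a sum of terms that are each linear in the distribution of the coefficient. -/
theorem rpow_le_sum_integral (hs : 0 < s) (hp : 1 ≤ p) {Y : ℕ → ℝ}
    (hY0 : Y 0 = -(Real.pi / s) ^ 2) (hY : Monotone Y) {M : ℝ} (n : ℕ) :
    ∀ {κ u du : ℝ → ℝ}, Continuous κ → (∀ t, |κ t| ≤ M) →
      IsJacobiSolution (fun t => min (κ t) (Y n)) s u du → (∀ t ∈ Ioc 0 s, 0 < u t) →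
      u s ^ p ≤ ∑ i ∈ Finset.range n, ∫ t in (0 : ℝ)..s,
        (min (κ t) (Y (i + 1)) - min (κ t) (Y i)) * sensitivity s p (Y (i + 1)) t := by
  have hs' : s ∈ Icc 0 s := right_mem_Icc.2 hs.le
  induction n with
  | zero =>
    intro κ u du hκ _ hu hpos
    obtain ⟨_, hc⟩ := constSol.exists_isJacobiSolution (Y 0) s
    have h := hu.le_of_le_const hc (by fun_prop) (fun t _ => min_le_right _ _)
      (hu.nonneg_of_pos hpos) (fun _ => constSol.nonneg hs hY0.ge) hs'
    rw [hY0, constSol.eq_zero_of_critical hs] at h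
    exact absurd (hpos s ⟨hs, le_rfl⟩) h.not_gt
  | succ n ih =>
    intro κ u du hκ hM hu hpos
    have hyn : -(Real.pi / s) ^ 2 ≤ Y (n + 1) := hY0 ▸ hY (Nat.zero_le _)
    have hu0 := hu.nonneg_of_pos hpos
    have hκn : Continuous fun t => min (κ t) (Y n) := by fun_prop
    have hκn1 : Continuous fun t => min (κ t) (Y (n + 1)) := by fun_prop
    obtain ⟨v, dv, hv⟩ := exists_of_continuous (s := s)
      (κ := fun t => min (κ (s - t)) (Y n)) (by fun_prop) (M := max M |Y n|)
      (fun t => abs_min_le_max_abs_abs.trans (max_le_max_right _ (hM _))) hs.le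
    have hle : ∀ t, min (κ t) (Y n) ≤ min (κ t) (Y (n + 1)) := fun t =>
      min_le_min_left _ (hY n.le_succ)
    set D := ∫ t in (0 : ℝ)..s, (min (κ t) (Y (n + 1)) - min (κ t) (Y n)) *
      (constSol (Y (n + 1)) t * constSol (Y (n + 1)) (s - t)) with hD
    have hD0 : 0 ≤ D := by
      refine intervalIntegral.integral_nonneg hs.le fun t ht => ?_
      exact mul_nonneg (sub_nonneg.2 (hle t)) (mul_nonneg (constSol.nonneg hs hyn ht)
        (constSol.nonneg hs hyn ⟨by linarith [ht.2], by linarith [ht.1]⟩))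
    have hstep : ∀ z ∈ Icc 0 s, (∀ t ∈ Icc 0 z, 0 ≤ v t) →
        u s ≤ du (s - z) * v z + u (s - z) * dv z + D := fun z hz hvz =>
      hu.le_add_integral_constSol hs hyn hκn1 hκn hle (fun t => min_le_right _ _) hu0 hv hz hvz
    have hsum0 : ∀ i, 0 ≤ ∫ t in (0 : ℝ)..s,
        (min (κ t) (Y (i + 1)) - min (κ t) (Y i)) * sensitivity s p (Y (i + 1)) t := fun i =>
      intervalIntegral.integral_nonneg hs.le fun t ht => by
        have hyi : -(Real.pi / s) ^ 2 ≤ Y (i + 1) := hY0 ▸ hY (Nat.zero_le _)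
        exact mul_nonneg (sub_nonneg.2 (min_le_min_left _ (hY i.le_succ)))
          (sensitivity.nonneg hs hp hyi ht)
    obtain ⟨b, hb0, hub, hbsum⟩ : ∃ b, 0 ≤ b ∧ u s ≤ b + D ∧ b ^ p ≤
        ∑ i ∈ Finset.range n, ∫ t in (0 : ℝ)..s,
          (min (κ t) (Y (i + 1)) - min (κ t) (Y i)) * sensitivity s p (Y (i + 1)) t := by
      rcases hv.pos_or_exists_first_zero hs with hvpos | ⟨z, hz, hvz, hdvz, hv0⟩
      · have h1 := hstep s hs' (hv.nonneg_of_pos hvpos)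
        simp only [sub_self, hu.zero, hu.deriv_zero, one_mul, zero_mul, add_zero] at h1
        refine ⟨v s, (hvpos s ⟨hs, le_rfl⟩).le, h1, ?_⟩
        refine (ih (κ := fun t => κ (s - t)) (by fun_prop) (fun t => hM _) hv hvpos).trans_eq ?_
        refine Finset.sum_congr rfl fun i _ => ?_
        have h2 := intervalIntegral.integral_comp_sub_left (a := 0) (b := s) (fun t =>
          (min (κ t) (Y (i + 1)) - min (κ t) (Y i)) * sensitivity s p (Y (i + 1)) t) s
        simp only [sensitivity.sub_left, sub_self, sub_zero] at h2
        exact h2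
      · have h1 := hstep z ⟨hz.1.le, hz.2⟩ hv0
        have h2 : u (s - z) * dv z ≤ 0 := mul_nonpos_of_nonneg_of_nonpos
          (hu0 _ ⟨by linarith [hz.2], by linarith [hz.1]⟩) hdvz
        refine ⟨0, le_rfl, by rw [hvz] at h1; linarith, ?_⟩
        rw [Real.zero_rpow (by linarith)]
        exact Finset.sum_nonneg fun i _ => hsum0 i
    obtain ⟨_, hc⟩ := constSol.exists_isJacobiSolution (Y (n + 1)) s
    have hus := hu.le_of_le_const hc hκn1 (fun t _ => min_le_right _ _) hu0
      (fun _ => constSol.nonneg hs hyn) hs'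
    have htan := Real.rpow_add_mul_sub_le_rpow hp (hu0 s hs') hb0
    have hpow : u s ^ (p - 1) ≤ constSol (Y (n + 1)) s ^ (p - 1) :=
      Real.rpow_le_rpow (hu0 s hs') hus (by linarith)
    have hpow0 : 0 ≤ u s ^ (p - 1) := Real.rpow_nonneg (hu0 s hs') _
    have hp0 : 0 ≤ p := by linarith
    have hlast : p * u s ^ (p - 1) * (u s - b) ≤ p * constSol (Y (n + 1)) s ^ (p - 1) * D :=
      calc p * u s ^ (p - 1) * (u s - b) ≤ p * u s ^ (p - 1) * D := by
            gcongr
            linarith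
        _ ≤ _ := by gcongr
    have hDeq : ∫ t in (0 : ℝ)..s, (min (κ t) (Y (n + 1)) - min (κ t) (Y n)) *
        sensitivity s p (Y (n + 1)) t = p * constSol (Y (n + 1)) s ^ (p - 1) * D := by
      rw [hD, ← intervalIntegral.integral_const_mul]
      refine intervalIntegral.integral_congr fun t _ => ?_
      simp only [sensitivity]
      ring
    rw [Finset.sum_range_succ, hDeq]
    linarith

end IsJacobiSolution

theorem sum_min_sub_mul_integral_le {s p δ : ℝ} (hs : 0 < s) (hp : 1 ≤ p) {Y : ℕ → ℝ}
    (hY0 : Y 0 = -(Real.pi / s) ^ 2) (hY : Monotone Y) (hδ : ∀ i, Y (i + 1) - Y i ≤ δ) (x : ℝ)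
    (n : ℕ) :
    ∑ i ∈ Finset.range n, (min x (Y (i + 1)) - min x (Y i)) *
        ∫ t in (0 : ℝ)..s, sensitivity s p (Y (i + 1)) t ≤
      sn (-min x (Y n)) s ^ p + δ * ((∫ t in (0 : ℝ)..s, sensitivity s p (Y n) t) -
        ∫ t in (0 : ℝ)..s, sensitivity s p (Y 0) t) := by
  induction n with
  | zero =>
    simp only [Finset.range_zero, Finset.sum_empty, sub_self, mul_zero, add_zero]
    rw [constSol.sn_neg_eq hs, max_eq_right (hY0 ▸ min_le_right _ _),
      constSol.eq_zero_of_critical hs, Real.zero_rpow (by linarith)]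
  | succ n ih =>
    rw [Finset.sum_range_succ]
    have hyn : -(Real.pi / s) ^ 2 ≤ Y n := hY0 ▸ hY (Nat.zero_le _)
    have hsucc := hY n.le_succ
    have hG := sensitivity.integral_mono hs hp hyn hsucc
    set G : ℕ → ℝ := fun i => ∫ t in (0 : ℝ)..s, sensitivity s p (Y i) t with hGdef
    change G n ≤ G (n + 1) at hG
    have hΔ : min x (Y (n + 1)) - min x (Y n) ≤ δ := by
      refine le_trans ?_ (hδ n)
      grind
    have hstep : (min x (Y (n + 1)) - min x (Y n)) * G n ≤
        sn (-min x (Y (n + 1))) s ^ p - sn (-min x (Y n)) s ^ p := by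
      rcases lt_or_ge x (Y n) with hx | hx
      · rw [min_eq_left hx.le, min_eq_left (hx.le.trans hsucc)]
        simp
      · have h1 : Y n ≤ min x (Y (n + 1)) := le_min hx hsucc
        rw [min_eq_right hx, constSol.sn_neg_eq hs, constSol.sn_neg_eq hs, max_eq_left hyn,
          max_eq_left (hyn.trans h1)]
        exact sensitivity.mul_integral_le hs hp hyn h1
    have h2 : (min x (Y (n + 1)) - min x (Y n)) * (G (n + 1) - G n) ≤ δ * (G (n + 1) - G n) :=
      mul_le_mul_of_nonneg_right hΔ (sub_nonneg.2 hG)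
    change _ + _ * G (n + 1) ≤ _ + δ * (G (n + 1) - G 0)
    change _ ≤ _ + δ * (G n - G 0) at ih
    linarith

/-- Exchanging the integrals shows that shuffling the coefficient by measure-preserving maps does
not change an integral that is additive over time. -/
theorem integral_intervalIntegral_comp_measurePreserving {T : Type*} [MeasurableSpace T]
    {μ : Measure T} [IsFiniteMeasure μ] {s : ℝ} (hs : 0 ≤ s) {k : T → ℝ} (hk : Measurable k)
    {σ : ℝ → T → T} (hσ : ∀ t, MeasurePreserving (σ t) μ μ)
    (hkcont : ∀ τ, ContinuousOn (fun t => k (σ t τ)) (Icc 0 s)) {F g : ℝ → ℝ} (hF : Continuous F)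
    {B : ℝ} (hFB : ∀ x, |F x| ≤ B) (hg : Continuous g) :
    Integrable (fun τ => ∫ t in (0 : ℝ)..s, F (k (σ t τ)) * g t) μ ∧
      ∫ τ, (∫ t in (0 : ℝ)..s, F (k (σ t τ)) * g t) ∂μ =
        ∫ τ, F (k τ) * (∫ t in (0 : ℝ)..s, g t) ∂μ := by
  let c : ℝ → T → ℝ := fun t τ => k (σ (projIcc 0 s hs t) τ)
  have hc : Measurable (Function.uncurry c) := by
    refine measurable_uncurry_of_continuous_of_measurable (fun τ => ?_)
      fun t => hk.comp (hσ _).measurable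
    exact (hkcont τ).domRestrict.Icc_extend'
  have hcongr : ∀ τ, ∫ t in (0 : ℝ)..s, F (k (σ t τ)) * g t =
      ∫ t in Ioc 0 s, F (c t τ) * g t := fun τ => by
    rw [intervalIntegral.integral_of_le hs]
    refine setIntegral_congr_fun measurableSet_Ioc fun t ht => ?_
    simp only [c, projIcc_of_mem hs ⟨ht.1.le, ht.2⟩]
  have hgi : Integrable g (volume.restrict (Ioc 0 s)) :=
    (hg.integrableOn_Icc).mono_set Ioc_subset_Icc_self
  have hint : Integrable (Function.uncurry fun t τ => F (c t τ) * g t)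
      ((volume.restrict (Ioc 0 s)).prod μ) :=
    (hgi.comp_fst μ).bdd_mul (hF.measurable.comp hc).aestronglyMeasurable
      (Filter.Eventually.of_forall fun q => hFB _)
  simp only [hcongr]
  refine ⟨hint.integral_prod_right, ?_⟩
  rw [← integral_integral_swap hint, integral_mul_const, intervalIntegral.integral_of_le hs,
    ← integral_const_mul]
  refine integral_congr_ae (Filter.Eventually.of_forall fun t => ?_)
  simp only [integral_mul_const, c]
  have h := integral_map (hσ (projIcc 0 s hs t)).aemeasurable (f := fun a => F (k a))
    (by rw [(hσ _).map_eq]; exact (hF.measurable.comp hk).aestronglyMeasurable)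
  rw [(hσ _).map_eq] at h
  exact congrArg (· * g t) h.symm

/-- **Constant coefficients are best** (corollary of the coefficient-shuffling theorem).
Let `(T, μ)` be a probability space, `k : T → ℝ` bounded measurable, and
`(σ_t)_{t ∈ [0, s]}` a family of measure-preserving maps with `σ₀ = id` such that
`t ↦ k(σ_t(τ))` is continuous on `[0, s]` for each `τ`. If `j(τ, ·)` solves the Jacobi
equation `∂ₜ² j(τ, t) = k(σ_t(τ))·j(τ, t)` on `[0, s]` with standard initial conditions
`j(τ, 0) = 0`, `∂ₜ j(τ, 0) = 1`, and `j(τ, t) > 0` on `(0, s]`, then for every real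
`p ≥ 1`,
`∫_T j(τ, s)^p dμ(τ) ≤ ∫_T sn(−k(τ), s)^p dμ(τ)`,
the right-hand side being the corresponding total for the unshuffled constant-coefficient
family. -/
theorem constant_coefficients_are_best
    {T : Type*} [MeasurableSpace T] (μ : Measure T) [IsProbabilityMeasure μ]
    (s : ℝ) (hs : 0 < s) (p : ℝ) (hp : 1 ≤ p)
    (k : T → ℝ) (hkmeas : Measurable k) (C : ℝ) (hkbd : ∀ τ, |k τ| ≤ C)
    (σ : ℝ → T → T) (hσmeas : ∀ t, Measurable (σ t))
    (hσmp : ∀ t, MeasurePreserving (σ t) μ μ) (hσ0 : σ 0 = id)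
    (hkcont : ∀ τ, ContinuousOn (fun t => k (σ t τ)) (Set.Icc 0 s))
    (j : T → ℝ → ℝ) (hjmeas : Measurable (fun q : T × ℝ => j q.1 q.2))
    (hjC : ∀ τ, ContDiff ℝ 2 (j τ))
    (hj0 : ∀ τ, j τ 0 = 0) (hj0' : ∀ τ, deriv (j τ) 0 = 1)
    (hjeq : ∀ τ, ∀ t ∈ Set.Icc (0 : ℝ) s, deriv (deriv (j τ)) t = k (σ t τ) * j τ t)
    (hjpos : ∀ τ, ∀ t ∈ Set.Ioc (0 : ℝ) s, 0 < j τ t) :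
    ∫ τ, j τ s ^ p ∂μ ≤ ∫ τ, sn (-(k τ)) s ^ p ∂μ := by
  have hs' : s ∈ Icc 0 s := right_mem_Icc.2 hs.le
  have hc0 : -(Real.pi / s) ^ 2 ≤ 0 := neg_nonpos.2 (sq_nonneg _)
  set c := -(Real.pi / s) ^ 2 with hc
  set C' := max C 0 with hC'
  have hcC : c ≤ C' := hc0.trans (le_max_right _ _)
  have hkC : ∀ τ, k τ ≤ C' := fun τ => (le_abs_self _).trans ((hkbd τ).trans (le_max_left _ _))
  have hsn : ∀ x, 0 ≤ sn (-x) s := fun x => by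
    rw [constSol.sn_neg_eq hs]
    exact constSol.nonneg hs (le_max_right _ _) hs'
  have hsnC : ∀ x ≤ C', sn (-x) s ≤ constSol C' s := fun x hx => by
    rw [constSol.sn_neg_eq hs]
    exact constSol.mono hs (le_max_right _ _) (max_le hx hcC) hs'
  have hsnm : Measurable fun x => sn x s := by
    unfold sn
    refine Measurable.ite measurableSet_Ioi (Measurable.ite ?_ (by fun_prop) measurable_const)
      (Measurable.ite (measurableSet_singleton 0) measurable_const (by fun_prop))
    exact measurableSet_le measurable_const (by fun_prop)
  have hsnint : Integrable (fun τ => sn (-(k τ)) s ^ p) μ := by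
    refine Integrable.of_bound
      ((hsnm.comp hkmeas.neg).pow_const p).aestronglyMeasurable (constSol C' s ^ p)
      (Filter.Eventually.of_forall fun τ => ?_)
    rw [Real.norm_of_nonneg (Real.rpow_nonneg (hsn _) _)]
    exact Real.rpow_le_rpow (hsn _) (hsnC _ (hkC τ)) (by linarith)
  set K := (∫ t in (0 : ℝ)..s, sensitivity s p C' t) - ∫ t in (0 : ℝ)..s, sensitivity s p c t
    with hK
  have key : ∀ N : ℕ, ∫ τ, j τ s ^ p ∂μ ≤
      (∫ τ, sn (-(k τ)) s ^ p ∂μ) + (C' - c) / ((N : ℝ) + 1) * K := by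
    intro N
    set δ := (C' - c) / ((N : ℝ) + 1) with hδ
    have hδ0 : 0 ≤ δ := div_nonneg (sub_nonneg.2 hcC) (by positivity)
    let Y : ℕ → ℝ := fun i => c + i * δ
    have hY0 : Y 0 = c := by simp [Y]
    have hY : Monotone Y := fun a b hab => by
      simp only [Y]; gcongr
    have hYd : ∀ i, Y (i + 1) - Y i = δ := fun i => by
      simp only [Y, Nat.cast_add, Nat.cast_one]; ring
    have hYN : Y (N + 1) = C' := by
      simp only [Y, hδ, Nat.cast_add, Nat.cast_one]
      field_simp
      ring
    have hΔ0 : ∀ i x, 0 ≤ min x (Y (i + 1)) - min x (Y i) := fun i x =>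
      sub_nonneg.2 (min_le_min_left _ (hY i.le_succ))
    have hsh := fun i : ℕ => integral_intervalIntegral_comp_measurePreserving (μ := μ) hs.le hkmeas
      hσmp hkcont (F := fun x => min x (Y (i + 1)) - min x (Y i)) (by fun_prop) (B := δ)
      (fun x => by
        rw [abs_of_nonneg (hΔ0 i x), ← hYd i]
        have := hY i.le_succ
        grind) (sensitivity.continuous s p (Y (i + 1)))
    have hpt : ∀ τ, j τ s ^ p ≤ ∑ i ∈ Finset.range (N + 1), ∫ t in (0 : ℝ)..s,
        (min (k (σ t τ)) (Y (i + 1)) - min (k (σ t τ)) (Y i)) *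
          sensitivity s p (Y (i + 1)) t := by
      intro τ
      have hproj : ∀ t ∈ Icc 0 s, ((projIcc 0 s hs.le t : Icc 0 s) : ℝ) = t := fun t ht => by
        rw [projIcc_of_mem hs.le ht]
      have hsol : IsJacobiSolution
          (fun t => min (k (σ (projIcc 0 s hs.le t) τ)) (Y (N + 1))) s (j τ) (deriv (j τ)) := by
        have h2 : ContDiff ℝ 1 (deriv (j τ)) := ((contDiff_succ_iff_deriv (n := 1)).1
          (by simpa [one_add_one_eq_two] using hjC τ)).2.2
        refine ⟨hj0 τ, hj0' τ, fun t _ => ?_, fun t ht => ?_⟩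
        · exact ((hjC τ).differentiable (by norm_num) t).hasDerivAt
        · rw [hproj t ht, hYN, min_eq_left (hkC _), ← hjeq τ t ht]
          exact (h2.differentiable one_ne_zero t).hasDerivAt
      refine (IsJacobiSolution.rpow_le_sum_integral hs hp hY0 hY (N + 1)
        (hkcont τ).domRestrict.Icc_extend' (fun t => hkbd _) hsol (hjpos τ)).trans_eq ?_
      refine Finset.sum_congr rfl fun i _ => intervalIntegral.integral_congr fun t ht => ?_
      rw [uIcc_of_le hs.le] at ht
      simp only [IccExtend_of_mem hs.le _ ht, domRestrict_apply]
    have hint2 : ∀ i, Integrable (fun τ => (min (k τ) (Y (i + 1)) - min (k τ) (Y i)) *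
        ∫ t in (0 : ℝ)..s, sensitivity s p (Y (i + 1)) t) μ := fun i => by
      refine Integrable.mul_const (Integrable.of_bound (C := δ)
        (by fun_prop) (Filter.Eventually.of_forall fun τ => ?_)) _
      rw [Real.norm_of_nonneg (hΔ0 i _), ← hYd i]
      have := hY i.le_succ
      grind
    calc ∫ τ, j τ s ^ p ∂μ
        ≤ ∫ τ, ∑ i ∈ Finset.range (N + 1), (∫ t in (0 : ℝ)..s,
            (min (k (σ t τ)) (Y (i + 1)) - min (k (σ t τ)) (Y i)) *
              sensitivity s p (Y (i + 1)) t) ∂μ :=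
          integral_mono_of_nonneg
            (Filter.Eventually.of_forall fun τ => Real.rpow_nonneg (hjpos τ s ⟨hs, le_rfl⟩).le _)
            (integrable_finsetSum _ fun i _ => (hsh i).1) (Filter.Eventually.of_forall hpt)
      _ = ∫ τ, ∑ i ∈ Finset.range (N + 1), (min (k τ) (Y (i + 1)) - min (k τ) (Y i)) *
            (∫ t in (0 : ℝ)..s, sensitivity s p (Y (i + 1)) t) ∂μ := by
          rw [integral_finsetSum _ fun i _ => (hsh i).1,
            integral_finsetSum _ fun i _ => hint2 i]
          exact Finset.sum_congr rfl fun i _ => (hsh i).2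
      _ ≤ ∫ τ, (sn (-(k τ)) s ^ p + δ * K) ∂μ := by
          refine integral_mono (integrable_finsetSum _ fun i _ => hint2 i)
            (hsnint.add (integrable_const _)) fun τ => ?_
          have h := sum_min_sub_mul_integral_le hs hp hY0 hY (fun i => (hYd i).le) (k τ) (N + 1)
          rwa [hYN, hY0, min_eq_left (hkC τ)] at h
      _ = _ := by
          rw [integral_add hsnint (integrable_const _), integral_const]
          simp
  have hlim : Filter.Tendsto (fun N : ℕ => (∫ τ, sn (-(k τ)) s ^ p ∂μ) +
      (C' - c) / ((N : ℝ) + 1) * K) Filter.atTop (nhds (∫ τ, sn (-(k τ)) s ^ p ∂μ)) := by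
    have h : Filter.Tendsto (fun N : ℕ => (C' - c) / ((N : ℝ) + 1)) Filter.atTop (nhds 0) := by
      simpa [div_eq_mul_inv] using
        (tendsto_one_div_add_atTop_nhds_zero_nat (𝕜 := ℝ)).const_mul (C' - c)
    simpa using (h.mul_const K).const_add (∫ τ, sn (-(k τ)) s ^ p ∂μ)
  exact ge_of_tendsto' hlim key
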